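/- Let X be a pure d-dimensional simplicial complex, 0 ≤ i < d, 0 < η < 1 a fatness constant. Then for every i-cochain W with ‖W‖ < η^(2^(i+1)−1) and every real 0 < c ≤ 1/2 there exists 0 ≤ j ≤ i such that Pr[P_j ∈ S^j(W) and P_{j−1} ∉ S^{j−1}(W)] ≥ (c^j/(i+1))·‖W‖. -/

import Mathlib

/-!
Write `D k` for the total degree of the faces of cardinality `k`, so `norm k` is the law of
`P_{k-1}`. Everything rests on counting pairs `σ ⊂ ρ` of faces of consecutive cardinalities,
weighted by `deg ρ`: a face `σ` of cardinality `k` satisfies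
`∑_{ρ ⊃ σ} deg ρ = (d + 1 - k) deg σ` (`SC.sum_deg_above`), because inside each top face there are
`d + 1 - k` ways to add a vertex to `σ`; hence `(k + 1) D (k + 1) = (d + 1 - k) D k`.

* If every face of `S` has `A` of relative weight at least `t` above it, then
  `‖A‖ ≥ t ‖S‖` (`SC.norm_ge_of_link`). Iterating this along the fat faces gives
  `‖W‖ ≥ η ^ (2 ^ m - 1) ‖S^{i-m}(W)‖`. With `m = i + 1` and the bound on `‖W‖`, the empty face
  cannot be fat, so `‖S^{-1}(W)‖ = 0`.
* `Pr[P_j ∈ A, P_{j-1} ∉ B] ≥ ‖A‖ - ‖B‖` (`SC.norm_sub_le_prNI`). Telescoping over `0 ≤ j ≤ i`,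
  the `i + 1` probabilities in question sum to at least `‖W‖`, so one of them is at least
  `‖W‖ / (i + 1)`, which is at least `c ^ j ‖W‖ / (i + 1)`.
-/

open Finset

open scoped Classical

noncomputable section

/-- A pure `d`-dimensional simplicial complex on a finite vertex set `V`: a collection of
finite subsets of `V` (the faces), containing the empty face, closed under taking subsets,
in which every face is contained in a face of cardinality `d+1`. -/
structure SC (V : Type) [DecidableEq V] [Fintype V] (d : ℕ) where
  faces : Finset (Finset V)
  empty_mem : ∅ ∈ faces
  down_closed : ∀ σ ∈ faces, ∀ τ ⊆ σ, τ ∈ faces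
  pure : ∀ σ ∈ faces, ∃ τ ∈ faces, σ ⊆ τ ∧ τ.card = d + 1

namespace SC

variable {V : Type} [DecidableEq V] [Fintype V] {d : ℕ}

/-- The faces of cardinality `k`, i.e. the set `X(k-1)` of `(k-1)`-dimensional faces. -/
def fc (X : SC V d) (k : ℕ) : Finset (Finset V) :=
  X.faces.filter fun σ => σ.card = k

/-- The degree of a face: the number of top (`d`-dimensional) faces containing it. -/
def deg (X : SC V d) (σ : Finset V) : ℕ :=
  ((X.fc (d + 1)).filter fun τ => σ ⊆ τ).card

/-- The norm of a set `W` of faces of cardinality `k`: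
`‖W‖ = (Σ_{σ∈W} deg σ) / (Σ_{τ∈X(k-1)} deg τ)`. -/
def norm (X : SC V d) (k : ℕ) (W : Finset (Finset V)) : ℝ :=
  (∑ σ ∈ (X.fc k).filter (· ∈ W), (X.deg σ : ℝ)) / ∑ σ ∈ X.fc k, (X.deg σ : ℝ)

/-- `‖A_σ‖_σ`: the norm, computed inside the link of `σ`, of the localization to the link
of a set `A` of cardinality-`k` faces of `X`.  (The faces of the link of `σ` correspond
bijectively to the faces `ρ ⊇ σ` of `X` via `τ ↦ σ ∪ τ`, and this correspondence
preserves degrees.) -/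
def linkNorm (X : SC V d) (σ : Finset V) (k : ℕ) (A : Finset (Finset V)) : ℝ :=
  (∑ ρ ∈ (X.fc k).filter (fun ρ => σ ⊆ ρ ∧ ρ ∈ A), (X.deg ρ : ℝ)) /
    ∑ ρ ∈ (X.fc k).filter (fun ρ => σ ⊆ ρ), (X.deg ρ : ℝ)

/-- For a set `S` of vertices, the norm `‖·‖_σ` in the link of `σ` of the set of
`(m-1)`-dimensional faces of the link all of whose vertices lie in `S`.
For `m = 1` this is `‖S‖_σ` and for `m = 2` it is `‖E(S)‖_σ`. -/
def linkSubsetNorm (X : SC V d) (σ : Finset V) (m : ℕ) (S : Finset V) : ℝ :=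
  (∑ ρ ∈ (X.fc (σ.card + m)).filter (fun ρ => σ ⊆ ρ ∧ ρ \ σ ⊆ S), (X.deg ρ : ℝ)) /
    ∑ ρ ∈ (X.fc (σ.card + m)).filter (fun ρ => σ ⊆ ρ), (X.deg ρ : ℝ)

/-- `X` is an `α`-skeleton expander: for every face `σ ∈ X` (including `σ = ∅`) and every
set `S` of vertices of the link of `σ`, `‖E(S)‖_σ ≤ ‖S‖_σ (‖S‖_σ + α)`. -/
def IsSkeletonExpander (X : SC V d) (α : ℝ) : Prop :=
  ∀ σ ∈ X.faces, ∀ S : Finset V,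
    X.linkSubsetNorm σ 2 S ≤ X.linkSubsetNorm σ 1 S * (X.linkSubsetNorm σ 1 S + α)

/-- The expanding faces `ψ(W)` of a set `W` of cardinality-`k` faces: the
cardinality-`(k+1)` faces containing both a cardinality-`k` face in `W` and a
cardinality-`k` face not in `W`. -/
def psi (X : SC V d) (k : ℕ) (W : Finset (Finset V)) : Finset (Finset V) :=
  (X.fc (k + 1)).filter fun τ =>
    (∃ σ ⊆ τ, σ.card = k ∧ σ ∈ W) ∧ ∃ σ ⊆ τ, σ.card = k ∧ σ ∉ W

/-- `X` is an `ε`-colorful expander: for every `0 ≤ i < d` and every `i`-cochain `W` with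
`0 < ‖W‖ ≤ 1/2`, one has `‖ψ(W)‖/‖W‖ ≥ ε`. -/
def IsColorfulExpander (X : SC V d) (ε : ℝ) : Prop :=
  ∀ i : ℕ, i < d → ∀ W ⊆ X.fc (i + 1),
    0 < X.norm (i + 1) W → X.norm (i + 1) W ≤ 1 / 2 →
    ε ≤ X.norm (i + 2) (X.psi (i + 1) W) / X.norm (i + 1) W

/-- The container `Γ(W)` of a set `W` of cardinality-`k` faces: the cardinality-`(k+1)`
faces containing at least one cardinality-`k` face of `W`. -/
def container (X : SC V d) (k : ℕ) (W : Finset (Finset V)) : Finset (Finset V) :=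
  (X.fc (k + 1)).filter fun τ => ∃ σ ⊆ τ, σ.card = k ∧ σ ∈ W

/-- Fat faces: for an `i`-cochain `W` and fatness constant `η`, `X.fat i W η m` is the
set `S^{i-m}(W)` of fat faces of dimension `i - m` (so of cardinality `i + 1 - m`);
`m = i + 1` gives `S^{-1}(W)`. -/
def fat (X : SC V d) (i : ℕ) (W : Finset (Finset V)) (η : ℝ) : ℕ → Finset (Finset V)
  | 0 => (X.fc (i + 1)).filter (· ∈ W)
  | m + 1 => (X.fc (i - m)).filter fun σ =>
      η ^ 2 ^ m ≤ X.linkNorm σ (i - m + 1) (fat X i W η m)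

/-- Full faces: `X.full i W η j` is `F^j(W)`, the set of cardinality-`(j+1)` faces all of
whose cardinality-`j` subsets lie in `S^{j-1}(W) = X.fat i W η (i + 1 - j)`. -/
def full (X : SC V d) (i : ℕ) (W : Finset (Finset V)) (η : ℝ) (j : ℕ) :
    Finset (Finset V) :=
  (X.fc (j + 1)).filter fun τ => ∀ σ ⊆ τ, σ.card = j → σ ∈ X.fat i W η (i + 1 - j)

/-- `X.prNI ka kb A B` is the probability `Pr[P_{ka-1} ∈ A ∧ P_{kb-1} ∉ B]` for the chain
`P_d ⊃ P_{d-1} ⊃ ⋯` in which `P_d` is a uniformly random top face and each `P_{l-1}` is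
obtained from `P_l` by deleting a uniformly random vertex.  (Given `P_{ka-1} = σ`,
the face `P_{kb-1}` is a uniformly random cardinality-`kb` subset of `σ`, and
`Pr[P_{ka-1} = σ] = deg σ / Σ_{τ ∈ X(ka-1)} deg τ`.) -/
def prNI (X : SC V d) (ka kb : ℕ) (A B : Finset (Finset V)) : ℝ :=
  (∑ σ ∈ (X.fc ka).filter (· ∈ A),
      (X.deg σ : ℝ) * (((σ.powersetCard kb).filter (· ∉ B)).card : ℝ)) /
    ((ka.choose kb : ℝ) * ∑ σ ∈ X.fc ka, (X.deg σ : ℝ))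

end SC

/-! ### Multigraphs, given by symmetric adjacency-count matrices -/

/-- Degree of a vertex in the multigraph with adjacency counts `A`. -/
def mdeg {U : Type} [Fintype U] (A : U → U → ℕ) (v : U) : ℕ := ∑ u, A v u

/-- The transition matrix `DA` of the random walk on the multigraph `A`. -/
def transition {U : Type} [Fintype U] (A : U → U → ℕ) : Matrix U U ℝ :=
  Matrix.of fun u v => (A u v : ℝ) / (mdeg A u : ℝ)

/-- The normalized adjacency matrix `Ã = D^(1/2) A D^(1/2)`. -/
def normAdj {U : Type} [Fintype U] (A : U → U → ℕ) : Matrix U U ℝ :=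
  Matrix.of fun u v => (A u v : ℝ) / (Real.sqrt (mdeg A u) * Real.sqrt (mdeg A v))

/-- The stationary distribution `π(v) = deg v / Σ_u deg u`. -/
def statDist {U : Type} [Fintype U] (A : U → U → ℕ) (v : U) : ℝ :=
  (mdeg A v : ℝ) / ∑ u, (mdeg A u : ℝ)

/-- Maximum degree. -/
def dmaxDeg {U : Type} [Fintype U] (A : U → U → ℕ) : ℕ := ⨆ v, mdeg A v

/-- Minimum degree. -/
def dminDeg {U : Type} [Fintype U] (A : U → U → ℕ) : ℕ := ⨅ v, mdeg A v

/-- The random walk on the multigraph `A` is `μ`-rapidly mixing: for every initial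
probability distribution `π0` and every `t`, `‖π0 (DA)^t − π‖₂ ≤ √(dmax/dmin) μ^t`. -/
def IsRapidMixing {U : Type} [Fintype U] [DecidableEq U] (A : U → U → ℕ) (μ : ℝ) : Prop :=
  ∀ π0 : U → ℝ, (∀ v, 0 ≤ π0 v) → ∑ v, π0 v = 1 → ∀ t : ℕ,
    Real.sqrt (∑ v, (Matrix.vecMul π0 (transition A ^ t) v - statDist A v) ^ 2) ≤
      Real.sqrt ((dmaxDeg A : ℝ) / (dminDeg A : ℝ)) * μ ^ t

/-- The lazy version of a multigraph: add `deg v` self-loops at every vertex `v`. -/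
def lazy {U : Type} [Fintype U] [DecidableEq U] (A : U → U → ℕ) : U → U → ℕ :=
  fun u v => A u v + if u = v then mdeg A u else 0

/-- `|E(S, S̄)|`: the number of edges with one endpoint in `S` and one in its complement. -/
def cutEdges {U : Type} [Fintype U] [DecidableEq U] (A : U → U → ℕ) (S : Finset U) : ℝ :=
  ∑ u ∈ S, ∑ v ∈ Sᶜ, (A u v : ℝ)

/-- `vol S = Σ_{v ∈ S} deg v`. -/
def vol {U : Type} [Fintype U] (A : U → U → ℕ) (S : Finset U) : ℝ :=
  ∑ v ∈ S, (mdeg A v : ℝ)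

/-- The conductance `Φ(G) = min { |E(S,S̄)|/vol S : ∅ ≠ S, vol S ≤ vol V / 2 }`. -/
def conductance {U : Type} [Fintype U] [DecidableEq U] (A : U → U → ℕ) : ℝ :=
  sInf { x : ℝ | ∃ S : Finset U, S.Nonempty ∧ vol A S ≤ vol A Finset.univ / 2 ∧
    x = cutEdges A S / vol A S }

/-- `|E(T)|`: the number of edges with both endpoints in `T`. -/
def edgesWithin {U : Type} [Fintype U] (A : U → U → ℕ) (T : Finset U) : ℝ :=
  ((∑ u ∈ T, ∑ v ∈ T, (A u v : ℝ)) + ∑ v ∈ T, (A v v : ℝ)) / 2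

/-- The bipartiteness ratio
`β(G) = min {(|E(S,S̄)| + 2(|E(S1)| + |E(S2)|))/vol S : S = S1 ⊔ S2 ≠ ∅}`. -/
def bipRatio {U : Type} [Fintype U] [DecidableEq U] (A : U → U → ℕ) : ℝ :=
  sInf { x : ℝ | ∃ S1 S2 : Finset U, (S1 ∪ S2).Nonempty ∧ Disjoint S1 S2 ∧
    x = (cutEdges A (S1 ∪ S2) + 2 * (edgesWithin A S1 + edgesWithin A S2)) /
      vol A (S1 ∪ S2) }

/-- The adjacency counts of the `i`-graph `G_i(X)`: its vertices are the `i`-faces of `X`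
(cardinality `i+1`), and two neighboring `i`-faces `σ ∼ τ` (i.e. `σ ∪ τ ∈ X(i+1)`) are
joined by `deg (σ ∪ τ)` parallel edges. -/
def SC.adjG {V : Type} [DecidableEq V] [Fintype V] {d : ℕ} (X : SC V d) (i : ℕ) :
    {σ // σ ∈ X.fc (i + 1)} → {σ // σ ∈ X.fc (i + 1)} → ℕ :=
  fun σ τ => if σ.1 ∪ τ.1 ∈ X.fc (i + 2) then X.deg (σ.1 ∪ τ.1) else 0

end
namespace SC

variable {V : Type} [DecidableEq V] [Fintype V] {d : ℕ}

/-! ### Counting pairs of faces of consecutive cardinalities -/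

/-- The total degree of the faces of cardinality `k`. -/
noncomputable def totalDeg (X : SC V d) (k : ℕ) : ℝ := ∑ σ ∈ X.fc k, (X.deg σ : ℝ)

lemma mem_fc {X : SC V d} {k : ℕ} {σ : Finset V} :
    σ ∈ X.fc k ↔ σ ∈ X.faces ∧ σ.card = k := by
  simp [fc]

lemma deg_pos (X : SC V d) {σ : Finset V} (h : σ ∈ X.faces) : 0 < X.deg σ := by
  obtain ⟨τ, h1, h2, h3⟩ := X.pure σ h
  exact Finset.card_pos.2 ⟨τ, by simp [mem_fc, h1, h2, h3]⟩

/-- Adding one vertex of `τ \ σ` to `σ` yields each intermediate face exactly once. -/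
lemma card_between (X : SC V d) {k : ℕ} {σ τ : Finset V} (hσ : σ.card = k)
    (hτ : τ ∈ X.fc (d + 1)) (h : σ ⊆ τ) :
    ((X.fc (k + 1)).filter fun ρ => σ ⊆ ρ ∧ ρ ⊆ τ).card = d + 1 - k := by
  have hτ' := mem_fc.1 hτ
  have : ((X.fc (k + 1)).filter fun ρ => σ ⊆ ρ ∧ ρ ⊆ τ)
      = (τ \ σ).image (fun v => insert v σ) := by
    ext ρ
    simp only [mem_filter, mem_image, mem_sdiff, mem_fc]
    constructor
    · rintro ⟨⟨_, hc⟩, h1, h2⟩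
      have hc1 : (ρ \ σ).card = 1 := by rw [card_sdiff_of_subset h1]; omega
      obtain ⟨v, hv⟩ := card_eq_one.1 hc1
      have hv' : v ∈ ρ \ σ := by rw [hv]; simp
      rw [mem_sdiff] at hv'
      refine ⟨v, ⟨h2 hv'.1, hv'.2⟩, ?_⟩
      rw [insert_eq, ← hv, sdiff_union_of_subset h1]
    · rintro ⟨v, ⟨h1, h2⟩, rfl⟩
      have hs : insert v σ ⊆ τ := insert_subset h1 h
      exact ⟨⟨X.down_closed _ hτ'.1 _ hs, by rw [card_insert_of_notMem h2, hσ]⟩,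
        subset_insert _ _, hs⟩
  rw [this, card_image_of_injOn, card_sdiff_of_subset h, hτ'.2, hσ]
  intro v hv w hw hvw
  simp only [coe_sdiff, Set.mem_sdiff, mem_coe] at hv hw
  have : v ∈ insert w σ := by
    have : v ∈ insert v σ := mem_insert_self _ _
    simpa only [hvw] using this
  simpa [hv.2] using this

lemma sum_deg_above (X : SC V d) {k : ℕ} (hk : k ≤ d) {σ : Finset V} (hσ : σ.card = k) :
    ∑ ρ ∈ (X.fc (k + 1)).filter (fun ρ => σ ⊆ ρ), (X.deg ρ : ℝ)
      = ((d : ℝ) + 1 - k) * X.deg σ := by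
  have h : ∑ ρ ∈ (X.fc (k + 1)).filter (fun ρ => σ ⊆ ρ), X.deg ρ
      = X.deg σ * (d + 1 - k) := by
    unfold deg
    rw [← Finset.sum_const_nat (s := (X.fc (d + 1)).filter fun τ => σ ⊆ τ)
      (f := fun τ => ((X.fc (k + 1)).filter fun ρ => σ ⊆ ρ ∧ ρ ⊆ τ).card)]
    · simp only [card_eq_sum_ones]
      apply Finset.sum_comm'
      intro ρ τ
      simp only [mem_filter]
      constructor
      · rintro ⟨⟨a, b⟩, e, f⟩
        exact ⟨⟨a, b, f⟩, e, b.trans f⟩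
      · rintro ⟨⟨a, b, f⟩, e, _⟩
        exact ⟨⟨a, b⟩, e, f⟩
    · intro τ hτ
      rw [mem_filter] at hτ
      exact card_between X hσ hτ.1 hτ.2
  rw [← Nat.cast_sum, h]
  push_cast [Nat.cast_sub (show k ≤ d + 1 by omega)]
  ring

/-- Double counting of the pairs `τ ⊂ ρ` with `ρ ∈ A` and `τ ∈ B`, weighted by `deg ρ`. -/
lemma double_count (X : SC V d) (k : ℕ) (A B : Finset (Finset V)) :
    ∑ ρ ∈ (X.fc (k + 1)).filter (· ∈ A),
        (X.deg ρ : ℝ) * (((ρ.powersetCard k).filter (· ∈ B)).card : ℝ)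
      = ∑ τ ∈ (X.fc k).filter (· ∈ B),
          ∑ ρ ∈ (X.fc (k + 1)).filter (fun ρ => τ ⊆ ρ ∧ ρ ∈ A), (X.deg ρ : ℝ) := by
  have : ∀ ρ ∈ (X.fc (k + 1)).filter (· ∈ A),
      (X.deg ρ : ℝ) * (((ρ.powersetCard k).filter (· ∈ B)).card : ℝ)
        = ∑ τ ∈ (ρ.powersetCard k).filter (· ∈ B), (X.deg ρ : ℝ) := by
    intro ρ _
    rw [sum_const, nsmul_eq_mul, mul_comm]
  rw [sum_congr rfl this]
  apply Finset.sum_comm'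
  intro ρ τ
  simp only [mem_filter, mem_powersetCard, mem_fc]
  constructor
  · rintro ⟨⟨⟨a, b⟩, e⟩, ⟨f, g⟩, h⟩
    exact ⟨⟨⟨a, b⟩, f, e⟩, ⟨X.down_closed _ a _ f, g⟩, h⟩
  · rintro ⟨⟨⟨a, b⟩, f, e⟩, ⟨_, g⟩, h⟩
    exact ⟨⟨⟨a, b⟩, e⟩, ⟨f, g⟩, h⟩

lemma totalDeg_pos (X : SC V d) {k : ℕ} (hk : k ≤ d + 1) : 0 < X.totalDeg k := by
  obtain ⟨τ, h1, -, h3⟩ := X.pure ∅ X.empty_mem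
  obtain ⟨σ, hs, hc⟩ := exists_subset_card_eq (h3.symm ▸ hk)
  have hσ := X.down_closed _ h1 _ hs
  exact sum_pos' (fun _ _ => Nat.cast_nonneg _)
    ⟨σ, mem_fc.2 ⟨hσ, hc⟩, Nat.cast_pos.2 (X.deg_pos hσ)⟩

/-- Both sides count the pairs `σ ⊂ ρ` of faces with `|σ| = k` and `|ρ| = k + 1`, weighted by
`deg ρ`. -/
lemma totalDeg_succ (X : SC V d) {k : ℕ} (hk : k ≤ d) :
    ((k : ℝ) + 1) * X.totalDeg (k + 1) = ((d : ℝ) + 1 - k) * X.totalDeg k := by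
  have h := X.double_count k univ univ
  simp only [mem_univ, filter_true, card_powersetCard, and_true] at h
  rw [totalDeg, totalDeg, mul_sum, mul_sum]
  rw [sum_congr rfl fun τ hτ => X.sum_deg_above hk (mem_fc.1 hτ).2] at h
  rw [← h]
  refine sum_congr rfl fun ρ hρ => ?_
  rw [(mem_fc.1 hρ).2, Nat.choose_succ_self_right]
  push_cast
  ring

/-! ### Comparing norms in consecutive dimensions -/

lemma norm_nonneg (X : SC V d) (k : ℕ) (A : Finset (Finset V)) : 0 ≤ X.norm k A :=
  div_nonneg (sum_nonneg fun _ _ => Nat.cast_nonneg _) (sum_nonneg fun _ _ => Nat.cast_nonneg _)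

lemma norm_mul (X : SC V d) {k : ℕ} (hk : k ≤ d + 1) (A : Finset (Finset V)) :
    ∑ σ ∈ (X.fc k).filter (· ∈ A), (X.deg σ : ℝ) = X.norm k A * X.totalDeg k :=
  (div_mul_cancel₀ _ (X.totalDeg_pos hk).ne').symm

/-- The union bound `Pr[P_k ∈ A] ≤ Pr[P_k ∈ A, P_{k-1} ∉ B] + Pr[P_{k-1} ∈ B]`. -/
lemma norm_sub_le_prNI (X : SC V d) {k : ℕ} (hk : k ≤ d) (A B : Finset (Finset V)) :
    X.norm (k + 1) A - X.norm k B ≤ X.prNI (k + 1) k A B := by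
  have hD := X.totalDeg_pos (k := k + 1) (by omega)
  have hk1 : (0 : ℝ) < (k : ℝ) + 1 := by positivity
  unfold prNI
  change _ ≤ _ / (_ * X.totalDeg (k + 1))
  rw [Nat.choose_succ_self_right]
  push_cast
  rw [le_div_iff₀ (by positivity)]
  -- Each face of cardinality `k + 1` has `k + 1` facets, each of them in `B` or outside `B`.
  have hsplit : ∑ σ ∈ (X.fc (k + 1)).filter (· ∈ A),
        (X.deg σ : ℝ) * (((σ.powersetCard k).filter (· ∉ B)).card : ℝ)
      + ∑ σ ∈ (X.fc (k + 1)).filter (· ∈ A),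
        (X.deg σ : ℝ) * (((σ.powersetCard k).filter (· ∈ B)).card : ℝ)
      = ((k : ℝ) + 1) * (X.norm (k + 1) A * X.totalDeg (k + 1)) := by
    rw [← X.norm_mul (by omega), ← sum_add_distrib, mul_sum]
    refine sum_congr rfl fun σ hσ => ?_
    have hc := (mem_fc.1 (mem_filter.1 hσ).1).2
    have h := card_filter_add_card_filter_not (s := σ.powersetCard k) (fun τ => τ ∈ B)
    rw [card_powersetCard, hc, Nat.choose_succ_self_right] at h
    have h' : (((σ.powersetCard k).filter (· ∈ B)).card : ℝ)
        + (((σ.powersetCard k).filter (· ∉ B)).card : ℝ) = (k : ℝ) + 1 := by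
      exact_mod_cast h
    rw [← h']
    ring
  have hB : ∑ σ ∈ (X.fc (k + 1)).filter (· ∈ A),
        (X.deg σ : ℝ) * (((σ.powersetCard k).filter (· ∈ B)).card : ℝ)
      ≤ X.norm k B * (((k : ℝ) + 1) * X.totalDeg (k + 1)) := by
    rw [double_count, X.totalDeg_succ hk]
    calc _ ≤ ∑ τ ∈ (X.fc k).filter (· ∈ B), ((d : ℝ) + 1 - k) * X.deg τ := by
          refine sum_le_sum fun τ hτ => ?_
          rw [← X.sum_deg_above hk (mem_fc.1 (mem_filter.1 hτ).1).2]
          refine sum_le_sum_of_subset_of_nonneg ?_ fun _ _ _ => Nat.cast_nonneg _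
          exact monotone_filter_right _ fun _ _ h => h.1
      _ = _ := by
          rw [← mul_sum, X.norm_mul (by omega)]
          ring
  linarith

/-- If `A` has relative weight at least `t` in the link of every face of `S`, then
`‖A‖ ≥ t ‖S‖`. -/
lemma norm_ge_of_link (X : SC V d) {k : ℕ} (hk : k ≤ d) {t : ℝ} (A S : Finset (Finset V))
    (h : ∀ σ ∈ X.fc k, σ ∈ S → t ≤ X.linkNorm σ (k + 1) A) :
    t * X.norm k S ≤ X.norm (k + 1) A := by
  have hD := X.totalDeg_pos (k := k + 1) (by omega)
  have hkd : (0 : ℝ) < (d : ℝ) + 1 - k := by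
    have : (k : ℝ) ≤ d := by exact_mod_cast hk
    linarith
  have hpos : 0 < ((k : ℝ) + 1) * X.totalDeg (k + 1) := by positivity
  refine le_of_mul_le_mul_right ?_ hpos
  calc t * X.norm k S * (((k : ℝ) + 1) * X.totalDeg (k + 1))
      = ∑ τ ∈ (X.fc k).filter (· ∈ S), t * (((d : ℝ) + 1 - k) * X.deg τ) := by
        rw [← mul_sum, ← mul_sum, X.norm_mul (by omega), X.totalDeg_succ hk]
        ring
    _ ≤ ∑ τ ∈ (X.fc k).filter (· ∈ S),
          ∑ ρ ∈ (X.fc (k + 1)).filter (fun ρ => τ ⊆ ρ ∧ ρ ∈ A), (X.deg ρ : ℝ) := by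
        refine sum_le_sum fun τ hτ => ?_
        rw [mem_filter] at hτ
        have hτ' := mem_fc.1 hτ.1
        have hl := h τ hτ.1 hτ.2
        unfold linkNorm at hl
        rw [X.sum_deg_above hk hτ'.2] at hl
        have : (0 : ℝ) < X.deg τ := Nat.cast_pos.2 (X.deg_pos hτ'.1)
        rwa [le_div_iff₀ (by positivity)] at hl
    _ = ∑ ρ ∈ (X.fc (k + 1)).filter (· ∈ A),
          (X.deg ρ : ℝ) * (((ρ.powersetCard k).filter (· ∈ S)).card : ℝ) :=
        (X.double_count k A S).symm
    _ ≤ ∑ ρ ∈ (X.fc (k + 1)).filter (· ∈ A), (X.deg ρ : ℝ) * ((k : ℝ) + 1) := by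
        refine sum_le_sum fun ρ hρ => ?_
        refine mul_le_mul_of_nonneg_left ?_ (Nat.cast_nonneg _)
        have hc := card_filter_le (ρ.powersetCard k) (· ∈ S)
        rw [card_powersetCard, (mem_fc.1 (mem_filter.1 hρ).1).2,
          Nat.choose_succ_self_right] at hc
        exact_mod_cast hc
    _ = X.norm (k + 1) A * (((k : ℝ) + 1) * X.totalDeg (k + 1)) := by
        rw [← sum_mul, X.norm_mul (by omega)]
        ring

/-! ### Norms of the fat faces -/

lemma norm_fat_zero (X : SC V d) (i : ℕ) (W : Finset (Finset V)) (η : ℝ) :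
    X.norm (i + 1) (X.fat i W η 0) = X.norm (i + 1) W := by
  unfold norm fat
  congr 2
  ext σ
  simp

lemma norm_fat_step (X : SC V d) {i m : ℕ} (hi : i < d) (hm : m ≤ i) (W : Finset (Finset V))
    (η : ℝ) :
    η ^ 2 ^ m * X.norm (i - m) (X.fat i W η (m + 1)) ≤ X.norm (i + 1 - m) (X.fat i W η m) := by
  rw [show i + 1 - m = i - m + 1 by omega]
  refine X.norm_ge_of_link (by omega) _ _ fun σ _ hσ => ?_
  exact (mem_filter.1 hσ).2

/-- The iteration of `norm_fat_step`: the exponents `1, 2, 4, …, 2 ^ (m - 1)` sum to `2 ^ m - 1`. -/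
lemma norm_fat_le (X : SC V d) {i : ℕ} (hi : i < d) (W : Finset (Finset V)) {η : ℝ}
    (hη : 0 < η) (m : ℕ) (hm : m ≤ i + 1) :
    η ^ (2 ^ m - 1) * X.norm (i + 1 - m) (X.fat i W η m) ≤ X.norm (i + 1) W := by
  induction m with
  | zero => simp [norm_fat_zero]
  | succ m ih =>
    refine le_trans ?_ (ih (by omega))
    have h := X.norm_fat_step hi (m := m) (by omega) W η
    have e : 2 ^ (m + 1) - 1 = (2 ^ m - 1) + 2 ^ m := by
      have := Nat.one_le_two_pow (n := m)
      rw [pow_succ]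
      omega
    rw [e, pow_add, mul_assoc, show i + 1 - (m + 1) = i - m by omega]
    exact mul_le_mul_of_nonneg_left h (by positivity)

/-- The only cochains in dimension `-1` are `∅` and `{∅}`, of norm `0` and `1`. -/
lemma norm_zero_eq (X : SC V d) (A : Finset (Finset V)) : X.norm 0 A = 0 ∨ X.norm 0 A = 1 := by
  have h0 : X.fc 0 = {∅} := by
    ext σ
    simp only [mem_fc, card_eq_zero, mem_singleton]
    exact ⟨fun h => h.2, fun h => ⟨h ▸ X.empty_mem, h⟩⟩
  have hp : (X.deg ∅ : ℝ) ≠ 0 := Nat.cast_ne_zero.2 (X.deg_pos X.empty_mem).ne'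
  unfold norm
  rw [h0, filter_singleton]
  by_cases h : ∅ ∈ A <;> simp [h, hp]

end SC

/-- **Existence of a dimension in which many fat faces contain many non-fat faces.**
For every `i`-cochain `W` with `‖W‖ < η^(2^(i+1)−1)` and every `0 < c ≤ 1/2` there is a
dimension `0 ≤ j ≤ i` with `Pr[P_j ∈ S^j(W) ∧ P_{j−1} ∉ S^{j−1}(W)] ≥ (c^j/(i+1))‖W‖`. -/
theorem statement1 {V : Type} [DecidableEq V] [Fintype V] {d : ℕ} (X : SC V d)
    (i : ℕ) (hi : i < d) (η : ℝ) (hη0 : 0 < η) (hη1 : η < 1)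
    (W : Finset (Finset V)) (hW : W ⊆ X.fc (i + 1))
    (hWnorm : X.norm (i + 1) W < η ^ (2 ^ (i + 1) - 1))
    (c : ℝ) (hc0 : 0 < c) (hc : c ≤ 1 / 2) :
    ∃ j ≤ i, c ^ j / ((i : ℝ) + 1) * X.norm (i + 1) W ≤
      X.prNI (j + 1) j (X.fat i W η (i - j)) (X.fat i W η (i + 1 - j)) := by
  have hbase : X.norm 0 (X.fat i W η (i + 1)) = 0 := by
    refine (X.norm_zero_eq _).resolve_right fun h1 => ?_
    have h := X.norm_fat_le hi W hη0 (i + 1) le_rfl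
    rw [Nat.sub_self, h1, mul_one] at h
    exact absurd hWnorm (not_lt.2 h)
  -- The norm of the fat faces of cardinality `j`, so that `f 0 = 0` and `f (i + 1) = ‖W‖`.
  set f : ℕ → ℝ := fun j => X.norm j (X.fat i W η (i + 1 - j)) with hf
  have hsum : ∑ j ∈ range (i + 1), (f (j + 1) - f j) = X.norm (i + 1) W := by
    rw [sum_range_sub]
    simp only [hf, Nat.sub_self, Nat.sub_zero, hbase, sub_zero]
    exact X.norm_fat_zero i W η
  obtain ⟨j, hj, hle⟩ : ∃ j ∈ range (i + 1),
      X.norm (i + 1) W / ((i : ℝ) + 1) ≤ f (j + 1) - f j := by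
    apply exists_le_of_sum_le (by simp)
    rw [hsum, sum_const, card_range, nsmul_eq_mul]
    push_cast
    rw [mul_div_cancel₀ _ (by positivity : (i : ℝ) + 1 ≠ 0)]
  have hji : j ≤ i := by
    rw [mem_range] at hj
    omega
  refine ⟨j, hji, ?_⟩
  calc c ^ j / ((i : ℝ) + 1) * X.norm (i + 1) W
      = c ^ j * (X.norm (i + 1) W / ((i : ℝ) + 1)) := by ring
    _ ≤ 1 * (X.norm (i + 1) W / ((i : ℝ) + 1)) := by
        refine mul_le_mul_of_nonneg_right (pow_le_one₀ hc0.le (by linarith)) ?_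
        exact div_nonneg (X.norm_nonneg _ _) (by positivity)
    _ ≤ f (j + 1) - f j := by rwa [one_mul]
    _ ≤ _ := by
        have h := X.norm_sub_le_prNI (k := j) (by omega) (X.fat i W η (i - j))
          (X.fat i W η (i + 1 - j))
        simpa only [hf, Nat.add_sub_add_right] using h
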